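/- arXiv:1112.1149 — 2 statements merged into one kernel-verified Lean document; each statement's English description precedes it below -/
import Mathlib

section
/- Let a, b, c, d be real numbers with 0 < a ≤ b, 0 < c ≤ d, ab = cd, and b/a > (5(d/c)+16)²/(16(d/c)). Then for every real y ≥ 0, R(a,b)(y) ≥ R(c,d)(y). -/
/-!
Write `t = y / b` and `u = y / d`. Counting lattice points row by row, the row `n` of the triangle
`a m + b n ≤ y` has `⌊(y - n b) / a⌋ + 1` points. Replacing `⌊z⌋ + 1` by `z` from below and by
`z + 1` from above and summing the arithmetic progressions gives

* `latticeCount a b y ≥ (b / 2a) (t² + t)`, and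
* `latticeCount c d y ≤ (d / 2c) (u² + u + 1/4) + u + 1`,

where the errors are controlled by `0 ≤ s (1 - s) ≤ 1/4` for the fractional parts `s`.
As `a b = c d`, the quadratic terms agree. The hypothesis on the ratio says exactly that
`b > 5d/4 + 4c`, which for `u ≥ 1` makes the linear term of the first bound dominate the remainder
of the second. For `u < 1` the triangle of `(c, d)` only has the row `n = 0`, and `a ≤ c` makes it a
subset of the triangle of `(a, b)`.
-/

/-- `latticeCount a b y` is the number of pairs `(m, n)` of nonnegative integers
with `a * m + b * n ≤ y`. -/
noncomputable def latticeCount (a b y : ℝ) : ℕ :=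
  Set.ncard {p : ℕ × ℕ | a * p.1 + b * p.2 ≤ y}

/-- The set counted by `latticeCount a b y`, as a finite union of its rows. -/
theorem latticeSet_eq {a b y : ℝ} (ha : 0 < a) (hb : 0 < b) (hy : 0 ≤ y) :
    {p : ℕ × ℕ | a * p.1 + b * p.2 ≤ y} =
      ((Finset.range (⌊y / b⌋₊ + 1)).biUnion fun n =>
        (Finset.range (⌊(y - n * b) / a⌋₊ + 1)).image fun m => (m, n) : Finset (ℕ × ℕ)) := by
  ext ⟨m, n⟩
  simp only [Set.mem_ofPred_eq, Finset.coe_biUnion, Finset.mem_coe, Finset.coe_image,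
    Set.mem_iUnion, Set.mem_image, Finset.mem_range, Nat.lt_succ_iff, Prod.mk.injEq, exists_prop]
  constructor
  · intro h
    have hm : 0 ≤ a * m := by positivity
    have hn : 0 ≤ b * n := by positivity
    refine ⟨n, ?_, m, ?_, rfl, rfl⟩
    · exact Nat.le_floor ((le_div_iff₀ hb).2 (by linarith))
    · exact Nat.le_floor ((le_div_iff₀ ha).2 (by linarith))
  · rintro ⟨n', hn, m', hm, rfl, rfl⟩
    have h1 := (le_div_iff₀ hb).1 ((Nat.le_floor_iff (by positivity)).1 hn)
    have h2 : 0 ≤ (y - n' * b) / a := div_nonneg (by linarith) ha.le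
    have h3 := (le_div_iff₀ ha).1 ((Nat.le_floor_iff h2).1 hm)
    linarith

theorem latticeCount_eq_sum {a b y : ℝ} (ha : 0 < a) (hb : 0 < b) (hy : 0 ≤ y) :
    latticeCount a b y =
      ∑ n ∈ Finset.range (⌊y / b⌋₊ + 1), (⌊(y - n * b) / a⌋₊ + 1) := by
  rw [latticeCount, latticeSet_eq ha hb hy, Set.ncard_coe_finset, Finset.card_biUnion]
  · refine Finset.sum_congr rfl fun n _ => ?_
    rw [Finset.card_image_of_injective _ fun _ _ h => (Prod.mk.inj h).1, Finset.card_range]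
  · intro n _ n' _ hne
    rw [Function.onFun, Finset.disjoint_left]
    intro p hp hp'
    simp only [Finset.mem_image] at hp hp'
    obtain ⟨_, _, rfl⟩ := hp
    obtain ⟨_, _, h⟩ := hp'
    exact hne (Prod.mk.inj h).2.symm

theorem sum_rows (a b y : ℝ) (N : ℕ) :
    ∑ n ∈ Finset.range (N + 1), (y - n * b) / a = ((N + 1) * y - b * (N * (N + 1) / 2)) / a := by
  induction N with
  | zero => simp
  | succ k ih => rw [Finset.sum_range_succ, ih]; push_cast; ring

theorem le_latticeCount {a b y : ℝ} (ha : 0 < a) (hb : 0 < b) (hy : 0 ≤ y) :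
    b / (2 * a) * ((y / b) ^ 2 + y / b) ≤ latticeCount a b y := by
  rw [latticeCount_eq_sum ha hb hy]
  have h1 := Nat.floor_le (div_nonneg hy hb.le)
  have h2 := Nat.lt_floor_add_one (y / b)
  set N := ⌊y / b⌋₊
  obtain ⟨t, ht⟩ : ∃ t, t = y / b := ⟨_, rfl⟩
  have hyt : y = t * b := by rw [ht]; field_simp
  rw [← ht] at h1 h2 ⊢
  calc b / (2 * a) * (t ^ 2 + t)
      ≤ b / (2 * a) * (t ^ 2 + t + (t - N) * (N + 1 - t)) := by
        refine mul_le_mul_of_nonneg_left ?_ (by positivity)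
        nlinarith [mul_nonneg (sub_nonneg.2 h1) (sub_nonneg.2 h2.le)]
    _ = ∑ n ∈ Finset.range (N + 1), (y - n * b) / a := by
        rw [sum_rows, hyt]; field_simp; ring
    _ ≤ _ := by
        push_cast
        exact Finset.sum_le_sum fun n _ => (Nat.lt_floor_add_one _).le

theorem latticeCount_le {c d y : ℝ} (hc : 0 < c) (hd : 0 < d) (hy : 0 ≤ y) :
    (latticeCount c d y : ℝ) ≤ d / (2 * c) * ((y / d) ^ 2 + y / d + 1 / 4) + y / d + 1 := by
  rw [latticeCount_eq_sum hc hd hy]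
  have h1 := Nat.floor_le (div_nonneg hy hd.le)
  set N := ⌊y / d⌋₊ with hN
  obtain ⟨u, hu⟩ : ∃ u, u = y / d := ⟨_, rfl⟩
  have hyu : y = u * d := by rw [hu]; field_simp
  rw [← hu] at h1 ⊢
  calc ((∑ n ∈ Finset.range (N + 1), (⌊(y - n * d) / c⌋₊ + 1) : ℕ) : ℝ)
      ≤ ∑ n ∈ Finset.range (N + 1), ((y - n * d) / c + 1) := by
        push_cast
        refine Finset.sum_le_sum fun n hn => ?_
        have hn' : (n : ℝ) ≤ N := by exact_mod_cast Nat.lt_succ_iff.1 (Finset.mem_range.1 hn)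
        have : 0 ≤ y - n * d := by rw [hyu]; nlinarith
        gcongr
        exact Nat.floor_le (by positivity)
    _ = d / (2 * c) * (u ^ 2 + u + (u - N) * (N + 1 - u)) + N + 1 := by
        rw [Finset.sum_add_distrib, sum_rows, hyu]
        simp only [Finset.sum_const, Finset.card_range, nsmul_eq_mul]
        push_cast
        field_simp
        ring
    _ ≤ _ := by
        gcongr
        nlinarith [sq_nonneg (u - N - 1 / 2)]

theorem stmt_3 (a b c d : ℝ) (ha : 0 < a) (hab : a ≤ b) (hc : 0 < c) (hcd : c ≤ d)
    (hvol : a * b = c * d)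
    (hratio : b / a > (5 * (d / c) + 16) ^ 2 / (16 * (d / c))) :
    ∀ y : ℝ, 0 ≤ y → latticeCount a b y ≥ latticeCount c d y := by
  intro y hy
  have hb : 0 < b := ha.trans_le hab
  have hd : 0 < d := hc.trans_le hcd
  have hbd : 5 * d / 4 + 4 * c < b := by
    have e1 : b / a = b ^ 2 / (c * d) := by rw [← hvol]; field_simp
    have e2 : (5 * (d / c) + 16) ^ 2 / (16 * (d / c)) = (5 * d / 4 + 4 * c) ^ 2 / (c * d) := by
      field_simp; ring
    rw [e1, e2, gt_iff_lt, div_lt_div_iff_of_pos_right (by positivity)] at hratio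
    exact lt_of_pow_lt_pow_left₀ 2 hb.le hratio
  rcases lt_or_ge y d with hyd | hyd
  · have hac : a ≤ c := by
      by_contra! h
      nlinarith
    refine Set.ncard_le_ncard ?_ ?_
    · rintro ⟨m, n⟩ h
      simp only [Set.mem_ofPred_eq] at h ⊢
      have hm : 0 ≤ c * m := by positivity
      obtain rfl : n = 0 := by
        by_contra hn
        have : (1 : ℝ) ≤ n := by exact_mod_cast Nat.one_le_iff_ne_zero.2 hn
        nlinarith
      have : a * m ≤ c * m := by gcongr
      simp only [Nat.cast_zero, mul_zero, add_zero] at h ⊢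
      linarith
    · rw [latticeSet_eq ha hb hy]
      exact Finset.finite_toSet _
  · have hlow := le_latticeCount ha hb hy
    have hup := latticeCount_le hc hd hy
    have hu : 1 ≤ y / d := (one_le_div hd).2 hyd
    obtain ⟨u, hu'⟩ : ∃ u, u = y / d := ⟨_, rfl⟩
    have hyu : y = u * d := by rw [hu']; field_simp
    rw [← hu'] at hup hu
    have ha' : a = c * d / b := by rw [← hvol]; field_simp
    -- both bounds share the leading term `u² d / 2c` once `a` is eliminated
    have e : b / (2 * a) * ((y / b) ^ 2 + y / b) = (d * u ^ 2 + b * u) / (2 * c) := by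
      rw [ha', hyu]; field_simp
    have key : d / (2 * c) * (u ^ 2 + u + 1 / 4) + u + 1 ≤ (d * u ^ 2 + b * u) / (2 * c) := by
      rw [le_div_iff₀ (by positivity)]
      have e3 : (d / (2 * c) * (u ^ 2 + u + 1 / 4) + u + 1) * (2 * c) =
          d * (u ^ 2 + u + 1 / 4) + 2 * c * (u + 1) := by field_simp; ring
      rw [e3]
      nlinarith [mul_nonneg (sub_nonneg.2 hbd.le) (zero_le_one.trans hu),
        mul_nonneg hd.le (sub_nonneg.2 hu), mul_nonneg hc.le (sub_nonneg.2 hu)]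
    rw [e] at hlow
    exact_mod_cast hup.trans (key.trans hlow)
end

section
/- Let a, b, d be positive real numbers with b/a > 2⁷/3 and 2a < d < √(ab). Then for every real y ≥ 0, R(a,b)(y) ≥ R(d, ab/d)(y). -/
theorem latticeCount_mul {k : ℝ} (hk : 0 < k) (a b y : ℝ) :
    latticeCount (k * a) (k * b) (k * y) = latticeCount a b y := by
  unfold latticeCount
  congr 1
  ext p
  simp only [Set.mem_ofPred_eq]
  rw [← mul_le_mul_iff_right₀ hk (b := a * p.1 + b * p.2)]
  ring_nf

/-- Counting row by row: row `n` contributes the integers `0 ≤ m ≤ t - e n`. -/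
theorem latticeCount_one_eq_sum {e t : ℝ} (he : 0 < e) (ht : 0 ≤ t) :
    latticeCount 1 e t = ∑ n ∈ Finset.range (⌊t / e⌋₊ + 1), (⌊t - e * n⌋₊ + 1) := by
  have key : {p : ℕ × ℕ | (1 : ℝ) * p.1 + e * p.2 ≤ t} =
      ((((Finset.range (⌊t / e⌋₊ + 1)).sigma
        (fun n => Finset.range (⌊t - e * n⌋₊ + 1))).image
          (fun q : (_ : ℕ) × ℕ => (q.2, q.1)) : Finset (ℕ × ℕ)) : Set (ℕ × ℕ)) := by
    ext ⟨m, n⟩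
    simp only [Set.mem_ofPred_eq, Finset.coe_image, Set.mem_image, Finset.mem_coe,
      Finset.mem_sigma, Finset.mem_range, Nat.lt_succ_iff, Prod.mk.injEq]
    constructor
    · intro h
      have hm : (0 : ℝ) ≤ m := Nat.cast_nonneg m
      refine ⟨⟨n, m⟩, ⟨Nat.le_floor ?_, Nat.le_floor ?_⟩, rfl, rfl⟩
      · rw [le_div_iff₀ he]
        linarith
      · show (m : ℝ) ≤ t - e * n
        linarith
    · rintro ⟨⟨n', m'⟩, ⟨h1, h2⟩, rfl, rfl⟩
      simp only at h1 h2 ⊢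
      rw [Nat.le_floor_iff (by positivity), le_div_iff₀ he] at h1
      rw [Nat.le_floor_iff (by linarith)] at h2
      linarith
  unfold latticeCount
  rw [key, Set.ncard_coe_finset, Finset.card_image_of_injective, Finset.card_sigma]
  · simp
  · rintro ⟨a, b⟩ ⟨a', b'⟩ h
    simp only [Prod.mk.injEq] at h
    obtain ⟨rfl, rfl⟩ := h
    rfl

theorem sum_range_sub_mul (e t : ℝ) (k : ℕ) :
    ∑ n ∈ Finset.range (k + 1), (t - e * n) = (k + 1) * t - e * (k * (k + 1) / 2) := by
  induction k with
  | zero => simp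
  | succ k ih =>
    rw [Finset.sum_range_succ, ih]
    push_cast
    ring

theorem sub_mul_nonneg_of_mem_range {e t : ℝ} (he : 0 < e) (ht : 0 ≤ t) {n : ℕ}
    (hn : n ∈ Finset.range (⌊t / e⌋₊ + 1)) : 0 ≤ t - e * n := by
  rw [Finset.mem_range, Nat.lt_succ_iff, Nat.le_floor_iff (by positivity), le_div_iff₀ he] at hn
  linarith

theorem latticeCount_one_le {e u : ℝ} (he : 0 < e) (hu : 0 ≤ u) :
    (latticeCount 1 e (e * u) : ℝ) ≤ e * u ^ 2 / 2 + e * u / 2 + u + e / 8 + 1 := by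
  have ht : 0 ≤ e * u := by positivity
  have hfl := Nat.floor_le hu
  have hdiv : e * u / e = u := by field_simp
  have hle : (latticeCount 1 e (e * u) : ℝ) ≤
      ∑ n ∈ Finset.range (⌊u⌋₊ + 1), ((e * u - e * n) + 1) := by
    rw [latticeCount_one_eq_sum he ht, hdiv]
    push_cast
    refine Finset.sum_le_sum fun n hn => ?_
    have := Nat.floor_le (sub_mul_nonneg_of_mem_range he ht (by rwa [hdiv]))
    linarith
  rw [Finset.sum_add_distrib, sum_range_sub_mul] at hle
  simp only [Finset.sum_const, Finset.card_range, nsmul_eq_mul, mul_one] at hle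
  push_cast at hle
  -- The quadratic in `⌊u⌋` is maximal at the real point `u - 1 / 2`.
  nlinarith [mul_nonneg he.le (sq_nonneg ((⌊u⌋₊ : ℝ) + 1 / 2 - u))]

theorem lt_latticeCount_one {c v : ℝ} (hc : 0 < c) (hv : 0 ≤ v) :
    c * v ^ 2 / 2 + c * v / 2 < latticeCount 1 c (c * v) := by
  have ht : 0 ≤ c * v := by positivity
  have hfl := Nat.floor_le hv
  have hfl' := Nat.lt_floor_add_one v
  have hdiv : c * v / c = v := by field_simp
  have hlt : ∑ n ∈ Finset.range (⌊v⌋₊ + 1), (c * v - c * n) < (latticeCount 1 c (c * v) : ℝ) := by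
    rw [latticeCount_one_eq_sum hc ht, hdiv]
    push_cast
    exact Finset.sum_lt_sum_of_nonempty (by simp) fun n _ => Nat.lt_floor_add_one _
  rw [sum_range_sub_mul] at hlt
  -- The row sum exceeds the claimed bound by `c s (1 - s) / 2`, where `s` is the fractional part.
  nlinarith [mul_nonneg hc.le (mul_nonneg (sub_nonneg.2 hfl) (sub_nonneg.2 hfl'.le))]

/-- If `t < e`, only the row `n = 0` contributes. -/
theorem latticeCount_one_of_lt {e t : ℝ} (he : 0 < e) (ht : 0 ≤ t) (h : t < e) :
    latticeCount 1 e t = ⌊t⌋₊ + 1 := by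
  have h0 : ⌊t / e⌋₊ = 0 := Nat.floor_eq_zero.2 ((div_lt_one he).2 h)
  rw [latticeCount_one_eq_sum he ht, h0]
  simp

theorem three_le_mul_sub {d e : ℝ} (hd : 2 < d) (he : 1 < e) (hc : 128 / 3 < d ^ 2 * e) :
    3 ≤ e * (d - 9 / 8) := by
  rcases le_total (33 / 8) d with h | h
  · nlinarith
  · have hd2 : 0 < d ^ 2 := by positivity
    refine le_of_mul_le_mul_left ?_ hd2
    have h1 : 128 / 3 * (d - 9 / 8) ≤ d ^ 2 * e * (d - 9 / 8) :=
      mul_le_mul_of_nonneg_right hc.le (by linarith)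
    nlinarith

theorem latticeCount_one_le_latticeCount_one {d e u : ℝ} (hd : 2 < d) (he : 1 < e)
    (hc : 128 / 3 < d ^ 2 * e) (hu : 0 ≤ u) :
    latticeCount 1 e (e * u) ≤ latticeCount 1 (d ^ 2 * e) (d * (e * u)) := by
  have he0 : 0 < e := by linarith
  have hd0 : 0 < d := by linarith
  have hc0 : 0 < d ^ 2 * e := by positivity
  have hK := three_le_mul_sub hd he hc
  have hU := latticeCount_one_le he0 hu
  rcases lt_or_ge u d with hud | hud
  · have hy : 0 ≤ d * (e * u) := by positivity
    rw [latticeCount_one_of_lt hc0 hy (by nlinarith [mul_pos hd0 he0])]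
    rcases lt_or_ge u 1 with h1 | h1
    · rw [latticeCount_one_of_lt he0 (by positivity) (by nlinarith)]
      refine Nat.succ_le_succ (Nat.floor_mono ?_)
      nlinarith [mul_nonneg he0.le hu]
    · suffices h : latticeCount 1 e (e * u) - 1 ≤ ⌊d * (e * u)⌋₊ by omega
      apply Nat.le_floor
      have hsub : (latticeCount 1 e (e * u) : ℝ) - 1 ≤ d * (e * u) := by
        have h2 : e * u ^ 2 ≤ d * (e * u) := by nlinarith [mul_nonneg he0.le hu]
        have h3 : 2 ≤ e * (d - 5 / 4) := by nlinarith
        have h4 : 2 * u ≤ e * (d - 5 / 4) * u := mul_le_mul_of_nonneg_right h3 hu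
        nlinarith
      rcases Nat.eq_zero_or_pos (latticeCount 1 e (e * u)) with h0 | h0
      · simpa [h0] using hy
      · rwa [Nat.cast_sub h0, Nat.cast_one]
  · have hR := lt_latticeCount_one hc0 (v := u / d) (by positivity)
    have e1 : d ^ 2 * e * (u / d) = d * (e * u) := by field_simp
    have e2 : d ^ 2 * e * (u / d) ^ 2 = e * u ^ 2 := by field_simp
    rw [e1, e2] at hR
    have h1 : 3 * u ≤ e * (d - 9 / 8) * u := mul_le_mul_of_nonneg_right hK hu
    have h2 : e * 2 ≤ e * u := mul_le_mul_of_nonneg_left (by linarith) he0.le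
    have : (latticeCount 1 e (e * u) : ℝ) ≤ latticeCount 1 (d ^ 2 * e) (d * (e * u)) := by
      nlinarith
    exact_mod_cast this

theorem stmt_4 (a b d : ℝ) (ha : 0 < a) (hb : 0 < b) (hd : 0 < d)
    (hratio : b / a > 2 ^ 7 / 3) (hd1 : 2 * a < d) (hd2 : d < Real.sqrt (a * b)) :
    ∀ y : ℝ, 0 ≤ y → latticeCount a b y ≥ latticeCount d (a * b / d) y := by
  intro y hy
  have hsq : d ^ 2 < a * b := (Real.lt_sqrt hd.le).1 hd2
  have hc : (d / a) ^ 2 * (a * b / d ^ 2) = b / a := by field_simp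
  -- Here `e = a b / d²` is the aspect ratio of the target and `u = y d / (a b)`.
  have key := latticeCount_one_le_latticeCount_one (d := d / a) (e := a * b / d ^ 2)
    (u := y * d / (a * b)) ((lt_div_iff₀ ha).2 hd1) ((one_lt_div (by positivity)).2 hsq)
    (by rw [hc]; norm_num at hratio ⊢; linarith) (by positivity)
  rw [hc, ← latticeCount_mul hd 1, ← latticeCount_mul ha 1 (b / a)] at key
  convert key using 2 <;> field_simp
end
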